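/- Let V be a finite-dimensional ℚ-vector space with dim V ≥ 3. The group GL(V) acts linearly on V ⊗ Λ²(P²V) by functoriality (g acting as g ⊗ Λ²(P²g)), and the subspace R(V) = ker m is invariant under this action. Then R(V) is nonzero and is an irreducible GL(V)-representation: the only GL(V)-invariant subspaces of R(V) are 0 and R(V) itself. -/

import Mathlib

/-!
Common constructions: for a `ℚ`-vector space `V`, the symmetric powers
`P²V, P³V, P⁴V, P⁵V` (as `SqM V`, `CubM V`, `QuarM V`, `QuinM V`), built as iterated
quotients of tensor products, with the multiplication maps between them; the exterior
square `Λ²W` (as `AltM W`) with the wedge map; and the 5-linear map `⋆` (as `star5`).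
-/

open TensorProduct

noncomputable section

variable (V W : Type) [AddCommGroup V] [Module ℚ V] [AddCommGroup W] [Module ℚ W]

/-- The relations defining the symmetric square `P²V` as a quotient of `V ⊗ V`. -/
def sqRel : Submodule ℚ (V ⊗[ℚ] V) :=
  Submodule.span ℚ {z | ∃ x y : V, z = x ⊗ₜ[ℚ] y - y ⊗ₜ[ℚ] x}

/-- The symmetric square `P²V`. -/
abbrev SqM : Type := (V ⊗[ℚ] V) ⧸ sqRel V

/-- The product `V × V → P²V`, `(x, y) ↦ xy`. -/
def sqm : V →ₗ[ℚ] V →ₗ[ℚ] SqM V :=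
  (TensorProduct.mk ℚ V V).compr₂ (sqRel V).mkQ

/-- The relations presenting the symmetric cube `P³V` as a quotient of `V ⊗ P²V`. -/
def cubRel : Submodule ℚ (V ⊗[ℚ] SqM V) :=
  Submodule.span ℚ {z | ∃ x y w : V, z = x ⊗ₜ[ℚ] sqm V y w - y ⊗ₜ[ℚ] sqm V x w}

/-- The symmetric cube `P³V`. -/
abbrev CubM : Type := (V ⊗[ℚ] SqM V) ⧸ cubRel V

/-- The product `V × P²V → P³V`. -/
def mulC : V →ₗ[ℚ] SqM V →ₗ[ℚ] CubM V :=
  (TensorProduct.mk ℚ V (SqM V)).compr₂ (cubRel V).mkQ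

/-- The relations presenting `P⁴V` as a quotient of `V ⊗ P³V`. -/
def quarRel : Submodule ℚ (V ⊗[ℚ] CubM V) :=
  Submodule.span ℚ {z | ∃ (x y : V) (u : SqM V), z = x ⊗ₜ[ℚ] mulC V y u - y ⊗ₜ[ℚ] mulC V x u}

/-- The symmetric fourth power `P⁴V`. -/
abbrev QuarM : Type := (V ⊗[ℚ] CubM V) ⧸ quarRel V

/-- The product `V × P³V → P⁴V`. -/
def mulQ : V →ₗ[ℚ] CubM V →ₗ[ℚ] QuarM V :=
  (TensorProduct.mk ℚ V (CubM V)).compr₂ (quarRel V).mkQ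

/-- The relations presenting `P⁵V` as a quotient of `V ⊗ P⁴V`. -/
def quinRel : Submodule ℚ (V ⊗[ℚ] QuarM V) :=
  Submodule.span ℚ {z | ∃ (x y : V) (c : CubM V), z = x ⊗ₜ[ℚ] mulQ V y c - y ⊗ₜ[ℚ] mulQ V x c}

/-- The symmetric fifth power `P⁵V`. -/
abbrev QuinM : Type := (V ⊗[ℚ] QuarM V) ⧸ quinRel V

/-- The product `V × P⁴V → P⁵V`. -/
def mulQn : V →ₗ[ℚ] QuarM V →ₗ[ℚ] QuinM V :=
  (TensorProduct.mk ℚ V (QuarM V)).compr₂ (quinRel V).mkQ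

/-- The relations defining the exterior square `Λ²W` as a quotient of `W ⊗ W`. -/
def altRel2 : Submodule ℚ (W ⊗[ℚ] W) :=
  Submodule.span ℚ {z | ∃ x : W, z = x ⊗ₜ[ℚ] x}

/-- The exterior square `Λ²W`. -/
abbrev AltM : Type := (W ⊗[ℚ] W) ⧸ altRel2 W

/-- The wedge product `W × W → Λ²W`. -/
def wdg : W →ₗ[ℚ] W →ₗ[ℚ] AltM W :=
  (TensorProduct.mk ℚ W W).compr₂ (altRel2 W).mkQ

/-- The element `⋆(x₁,…,x₅) = Σ_{i ∈ ℤ/5} xᵢ ⊗ (x_{i+1}x_{i+2} ∧ x_{i+3}x_{i+4})`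
of `V ⊗ Λ²(P²V)`. -/
def star5 (x₁ x₂ x₃ x₄ x₅ : V) : V ⊗[ℚ] AltM (SqM V) :=
    x₁ ⊗ₜ[ℚ] wdg (SqM V) (sqm V x₂ x₃) (sqm V x₄ x₅)
  + x₂ ⊗ₜ[ℚ] wdg (SqM V) (sqm V x₃ x₄) (sqm V x₅ x₁)
  + x₃ ⊗ₜ[ℚ] wdg (SqM V) (sqm V x₄ x₅) (sqm V x₁ x₂)
  + x₄ ⊗ₜ[ℚ] wdg (SqM V) (sqm V x₅ x₁) (sqm V x₂ x₃)
  + x₅ ⊗ₜ[ℚ] wdg (SqM V) (sqm V x₁ x₂) (sqm V x₃ x₄)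


section Aux

variable {V W}
variable {M : Type} [AddCommGroup M] [Module ℚ M]

theorem sqm_comm (x y : V) : sqm V x y = sqm V y x := by
  rw [← sub_eq_zero]
  change (sqRel V).mkQ (x ⊗ₜ y) - (sqRel V).mkQ (y ⊗ₜ x) = 0
  rw [← map_sub, Submodule.mkQ_apply, Submodule.Quotient.mk_eq_zero]
  exact Submodule.subset_span ⟨x, y, rfl⟩

theorem mulC_comm (x y w : V) : mulC V x (sqm V y w) = mulC V y (sqm V x w) := by
  rw [← sub_eq_zero]
  change (cubRel V).mkQ (x ⊗ₜ _) - (cubRel V).mkQ (y ⊗ₜ _) = 0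
  rw [← map_sub, Submodule.mkQ_apply, Submodule.Quotient.mk_eq_zero]
  exact Submodule.subset_span ⟨x, y, w, rfl⟩

theorem wdg_self (x : W) : wdg W x x = 0 := by
  change (altRel2 W).mkQ (x ⊗ₜ x) = 0
  rw [Submodule.mkQ_apply, Submodule.Quotient.mk_eq_zero]
  exact Submodule.subset_span ⟨x, rfl⟩

theorem wdg_anti (x y : W) : wdg W x y = - wdg W y x := by
  have h := wdg_self (x + y)
  simp only [map_add, LinearMap.add_apply, wdg_self, zero_add, add_zero] at h
  exact eq_neg_of_add_eq_zero_right h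

/-- lift from the symmetric square -/
def sqLift (B : V →ₗ[ℚ] V →ₗ[ℚ] M) (h : ∀ x y, B x y = B y x) : SqM V →ₗ[ℚ] M :=
  (sqRel V).liftQ (TensorProduct.lift B) (by
    rw [sqRel, Submodule.span_le]
    rintro _ ⟨x, y, rfl⟩
    simp [h x y])

@[simp] theorem sqLift_sqm (B : V →ₗ[ℚ] V →ₗ[ℚ] M) (h) (x y : V) :
    sqLift B h (sqm V x y) = B x y := by
  change (sqRel V).liftQ _ _ ((sqRel V).mkQ (x ⊗ₜ y)) = _
  simp

def altLift (B : W →ₗ[ℚ] W →ₗ[ℚ] M) (h : ∀ x, B x x = 0) : AltM W →ₗ[ℚ] M :=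
  (altRel2 W).liftQ (TensorProduct.lift B) (by
    rw [altRel2, Submodule.span_le]
    rintro _ ⟨x, rfl⟩
    simp [h x])

@[simp] theorem altLift_wdg (B : W →ₗ[ℚ] W →ₗ[ℚ] M) (h) (x y : W) :
    altLift B h (wdg W x y) = B x y := by
  change (altRel2 W).liftQ _ _ ((altRel2 W).mkQ (x ⊗ₜ y)) = _
  simp

def cubLift (B : V →ₗ[ℚ] SqM V →ₗ[ℚ] M) (h : ∀ x y w, B x (sqm V y w) = B y (sqm V x w)) :
    CubM V →ₗ[ℚ] M :=
  (cubRel V).liftQ (TensorProduct.lift B) (by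
    rw [cubRel, Submodule.span_le]
    rintro _ ⟨x, y, w, rfl⟩
    simp [h x y w])

@[simp] theorem cubLift_mulC (B : V →ₗ[ℚ] SqM V →ₗ[ℚ] M) (h) (x : V) (s : SqM V) :
    cubLift B h (mulC V x s) = B x s := by
  change (cubRel V).liftQ _ _ ((cubRel V).mkQ (x ⊗ₜ s)) = _
  simp

/-- Induction principle for the symmetric square. -/
theorem sq_ind {P : SqM V → Prop} (h0 : P 0) (ha : ∀ a b, P a → P b → P (a + b))
    (hg : ∀ x y, P (sqm V x y)) (s : SqM V) : P s := by
  obtain ⟨t, rfl⟩ := (sqRel V).mkQ_surjective s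
  induction t with
  | zero => simpa using h0
  | tmul x y => exact hg x y
  | add a b h1 h2 => rw [map_add]; exact ha _ _ h1 h2

theorem alt_ind {P : AltM W → Prop} (h0 : P 0) (ha : ∀ a b, P a → P b → P (a + b))
    (hg : ∀ x y, P (wdg W x y)) (s : AltM W) : P s := by
  obtain ⟨t, rfl⟩ := (altRel2 W).mkQ_surjective s
  induction t with
  | zero => simpa using h0
  | tmul x y => exact hg x y
  | add a b h1 h2 => rw [map_add]; exact ha _ _ h1 h2

theorem sq_ext {f g : SqM V →ₗ[ℚ] M} (h : ∀ x y, f (sqm V x y) = g (sqm V x y)) : f = g := by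
  refine LinearMap.ext fun s => ?_
  induction s using sq_ind with
  | h0 => simp
  | ha a b h1 h2 => simp [h1, h2]
  | hg x y => exact h x y

theorem alt_ext {f g : AltM W →ₗ[ℚ] M} (h : ∀ x y, f (wdg W x y) = g (wdg W x y)) : f = g := by
  refine LinearMap.ext fun s => ?_
  induction s using alt_ind with
  | h0 => simp
  | ha a b h1 h2 => simp [h1, h2]
  | hg x y => exact h x y

theorem sqSym_aux (B : V →ₗ[ℚ] V →ₗ[ℚ] M) (x y : V) : (B + B.flip) x y = (B + B.flip) y x := by
  simp only [LinearMap.add_apply, LinearMap.flip_apply]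
  exact add_comm _ _

def sqSym : (V →ₗ[ℚ] V →ₗ[ℚ] M) →ₗ[ℚ] (SqM V →ₗ[ℚ] M) where
  toFun B := sqLift (B + B.flip) (sqSym_aux B)
  map_add' A B := sq_ext fun x y => by simp; abel
  map_smul' c B := sq_ext fun x y => by simp

@[simp] theorem sqSym_sqm (B : V →ₗ[ℚ] V →ₗ[ℚ] M) (x y : V) :
    sqSym B (sqm V x y) = B x y + B y x := by
  simp [sqSym]

def altSym : (W →ₗ[ℚ] W →ₗ[ℚ] M) →ₗ[ℚ] (AltM W →ₗ[ℚ] M) where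
  toFun B := altLift (B - B.flip) (fun x => by simp)
  map_add' A B := alt_ext fun x y => by simp; abel
  map_smul' c B := alt_ext fun x y => by simp [smul_sub]

@[simp] theorem altSym_wdg (B : W →ₗ[ℚ] W →ₗ[ℚ] M) (x y : W) :
    altSym B (wdg W x y) = B x y - B y x := by
  simp [altSym]

def cubSym (N : SqM V →ₗ[ℚ] V →ₗ[ℚ] M) : CubM V →ₗ[ℚ] M :=
  cubLift (N.flip + sqSym.comp ((sqm V).compr₂ N)) (fun x y w => by
    simp [sqm_comm y x]; abel)

@[simp] theorem cubSym_mulC (N : SqM V →ₗ[ℚ] V →ₗ[ℚ] M) (x y z : V) :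
    cubSym N (mulC V x (sqm V y z)) = N (sqm V y z) x + (N (sqm V x y) z + N (sqm V x z) y) := by
  simp [cubSym]

variable (V) in
/-- the space `V ⊗ Λ²(P²V)` -/
abbrev FF : Type := V ⊗[ℚ] AltM (SqM V)

/-- generators -/
def G (q x y z w : V) : FF V := q ⊗ₜ[ℚ] wdg (SqM V) (sqm V x y) (sqm V z w)

theorem FF_ind {P : FF V → Prop} (h0 : P 0) (ha : ∀ a b, P a → P b → P (a + b))
    (hg : ∀ q x y z w, P (G q x y z w)) (s : FF V) : P s := by
  induction s using TensorProduct.induction_on with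
  | zero => exact h0
  | add a b h1 h2 => exact ha _ _ h1 h2
  | tmul q a =>
    induction a using alt_ind with
    | h0 => simpa using h0
    | ha a b h1 h2 => rw [tmul_add]; exact ha _ _ h1 h2
    | hg u v =>
      induction u using sq_ind with
      | h0 => simpa using h0
      | ha a b h1 h2 => rw [map_add, LinearMap.add_apply, tmul_add]; exact ha _ _ h1 h2
      | hg x y =>
        induction v using sq_ind with
        | h0 => simpa using h0
        | ha a b h1 h2 => rw [map_add, tmul_add]; exact ha _ _ h1 h2
        | hg z w => exact hg q x y z w

theorem G_xy (q x y z w : V) : G q x y z w = G q y x z w := by rw [G, sqm_comm x y, G]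
theorem G_zw (q x y z w : V) : G q x y z w = G q x y w z := by rw [G, sqm_comm z w, G]
theorem G_sw (q x y z w : V) : G q x y z w = - G q z w x y := by
  rw [G, wdg_anti, tmul_neg, G]
theorem G_self (q x y : V) : G q x y x y = 0 := by
  rw [G, wdg_self, tmul_zero]

theorem G_add1 (a b x y z w : V) : G (a + b) x y z w = G a x y z w + G b x y z w := by
  simp [G, add_tmul]
theorem G_add2 (q a b y z w : V) : G q (a + b) y z w = G q a y z w + G q b y z w := by
  simp [G, tmul_add]
theorem G_add3 (q a b y z w : V) : G q y (a + b) z w = G q y a z w + G q y b z w := by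
  simp [G, tmul_add]
theorem G_add4 (q a b x y w : V) : G q x y (a + b) w = G q x y a w + G q x y b w := by
  simp [G, tmul_add]
theorem G_add5 (q a b x y w : V) : G q x y w (a + b) = G q x y w a + G q x y w b := by
  simp [G, tmul_add]
theorem G_smul1 (c : ℚ) (q x y z w : V) : G (c • q) x y z w = c • G q x y z w := by
  simp [G, smul_tmul']
theorem G_smul2 (c : ℚ) (q x y z w : V) : G q (c • x) y z w = c • G q x y z w := by
  simp [G]
theorem G_smul3 (c : ℚ) (q x y z w : V) : G q x (c • y) z w = c • G q x y z w := by
  simp [G]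
theorem G_smul4 (c : ℚ) (q x y z w : V) : G q x y (c • z) w = c • G q x y z w := by
  simp [G]
theorem G_smul5 (c : ℚ) (q x y z w : V) : G q x y z (c • w) = c • G q x y z w := by
  simp [G]

/-- The functorial action -/
def sqMap (f : V →ₗ[ℚ] V) : SqM V →ₗ[ℚ] SqM V :=
  sqLift ((sqm V).compl₁₂ f f) (fun x y => by simpa using sqm_comm _ _)

def altMap (f : W →ₗ[ℚ] W) : AltM W →ₗ[ℚ] AltM W :=
  altLift ((wdg W).compl₁₂ f f) (fun x => by simpa using wdg_self _)

def TT (f : V →ₗ[ℚ] V) : FF V →ₗ[ℚ] FF V := TensorProduct.map f (altMap (sqMap f))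

theorem TT_G (f : V →ₗ[ℚ] V) (q x y z w : V) :
    TT f (G q x y z w) = G (f q) (f x) (f y) (f z) (f w) := by
  simp [TT, G, altMap, sqMap]

/-- the generators of `R(V)` -/
def K (p q x y z : V) : FF V :=
  G x p y q z + G x q y p z + G y p z q x + G y q z p x + G z p x q y + G z q x p y

theorem TT_K (f : V →ₗ[ℚ] V) (p q x y z : V) :
    TT f (K p q x y z) = K (f p) (f q) (f x) (f y) (f z) := by
  simp [K, TT_G]

theorem K_symm (p q x y z : V) : K p q x y z = K q p x y z := by
  simp only [K]; abel

theorem K_cyc (p q x y z : V) : K p q x y z = K p q y z x := by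
  simp only [K]; abel

theorem K_swap (p q x y z : V) : K p q x y z = - K p q y x z := by
  simp only [K]
  rw [G_sw x q y p z, G_sw x p y q z, G_sw y p z q x, G_sw y q z p x, G_sw z p x q y, G_sw z q x p y]
  abel

theorem K_self (p q x z : V) : K p q x x z = 0 := by
  have := K_swap p q x x z
  have h2 : (2 : ℚ) • K p q x x z = 0 := by
    rw [two_smul]; nth_rewrite 2 [this]; simp
  simpa using h2

theorem K_koszul (a x y z : V) :
    K a a x y z = K a x a y z + K a y x a z + K a z x y a := by
  have e0 : G y a z a x = -G y a x a z := by
    rw [G_sw y a z a x]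
  have e1 : G a x y a z = -G a a z x y := by
    rw [G_sw a x y a z]
  have e2 : G y a z x a = -G y a x a z := by
    rw [G_zw y a z x a, G_sw y a z a x]
  have e3 : G y x z a a = -G y a a x z := by
    rw [G_sw y x z a a]
  have e4 : G z x a a y = G z a x a y := by
    rw [G_xy z x a a y]
  have e5 : G x y a a z = G x a y a z := by
    rw [G_xy x y a a z]
  have e6 : G a a z y x = G a a z x y := by
    rw [G_zw a a z y x]
  have e7 : G a y z a x = -G a a x y z := by
    rw [G_sw a y z a x]
  have e8 : G z a x y a = G z a x a y := by
    rw [G_zw z a x y a]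
  have e9 : G z y x a a = -G z a a x y := by
    rw [G_xy z y x a a, G_sw z x y a a]
  have e10 : G x a y z a = G x a y a z := by
    rw [G_zw x a y z a]
  have e11 : G x z y a a = -G x a a y z := by
    rw [G_xy x z y a a, G_sw x y z a a]
  have e12 : G y a a z x = G y a a x z := by
    rw [G_zw y a a z x]
  have e13 : G y z a a x = -G y a x a z := by
    rw [G_xy y z a a x, G_sw y a z a x]
  have e14 : G a a x z y = G a a x y z := by
    rw [G_zw a a x z y]
  have e15 : G a z x a y = -G a a y x z := by
    rw [G_xy a z x a y, G_sw a x z a y]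
  simp only [K, e0, e1, e2, e3, e4, e5, e6, e7, e8, e9, e10, e11, e12, e13, e14, e15]
  abel

variable (V) in
def N1 : SqM V →ₗ[ℚ] V →ₗ[ℚ] (SqM V →ₗ[ℚ] FF V) :=
  LinearMap.mk₂ ℚ (fun s z => (TensorProduct.mk ℚ V (AltM (SqM V)) z).comp (wdg (SqM V) s))
    (fun a b z => by refine LinearMap.ext fun _ => ?_; simp [tmul_add])
    (fun c a z => by refine LinearMap.ext fun _ => ?_; simp)
    (fun a b z => by refine LinearMap.ext fun _ => ?_; simp [add_tmul])
    (fun c a z => by refine LinearMap.ext fun _ => ?_; simp [smul_tmul'])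

variable (V) in
def N2 : SqM V →ₗ[ℚ] V →ₗ[ℚ] (SqM V →ₗ[ℚ] FF V) :=
  LinearMap.mk₂ ℚ (fun s z => sqSym ((TensorProduct.mk ℚ V (AltM (SqM V))).compl₂
      ((wdg (SqM V) s).comp (sqm V z))))
    (fun a b z => by apply sq_ext; intros; simp [tmul_add]; abel)
    (fun c a z => by apply sq_ext; intros; simp)
    (fun a b z => by apply sq_ext; intros; simp [tmul_add]; abel)
    (fun c a z => by apply sq_ext; intros; simp)

theorem N1_apply (x y z u v : V) : N1 V (sqm V x y) z (sqm V u v) = G z x y u v := by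
  simp [N1, G]

theorem N2_apply (x y z u v : V) :
    N2 V (sqm V x y) z (sqm V u v) = G u x y z v + G v x y z u := by
  simp [N2, G]

variable (V) in
def hh (N : SqM V →ₗ[ℚ] V →ₗ[ℚ] (SqM V →ₗ[ℚ] FF V)) : (CubM V ⊗[ℚ] SqM V) →ₗ[ℚ] FF V :=
  TensorProduct.lift (cubSym N)

theorem hh_apply (N : SqM V →ₗ[ℚ] V →ₗ[ℚ] (SqM V →ₗ[ℚ] FF V)) (x y z : V) (u : SqM V) :
    hh V N (mulC V x (sqm V y z) ⊗ₜ u) = N (sqm V y z) x u + (N (sqm V x y) z u + N (sqm V x z) y u) := by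
  simp [hh]

theorem main_identity (m : (V ⊗[ℚ] AltM (SqM V)) →ₗ[ℚ] (CubM V ⊗[ℚ] SqM V))
    (hm : ∀ (q : V) (u v : SqM V),
      m (q ⊗ₜ[ℚ] wdg (SqM V) u v) = mulC V q u ⊗ₜ[ℚ] v - mulC V q v ⊗ₜ[ℚ] u) (q x y z w : V) :
    (10 : ℚ) • G q x y z w - (3 : ℚ) • hh V (N1 V) (m (G q x y z w)) + hh V (N2 V) (m (G q x y z w))
      = K y w q x z + K x w q y z + K y z q x w + K x z q y w := by
  have e0 : G q y x w z = -G q w z x y := by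
    rw [G_xy q y x w z, G_sw q x y w z]
  have e1 : G x y z w q = -G x q w y z := by
    rw [G_zw x y z w q, G_sw x y z q w]
  have e2 : G x w z y q = -G x q y w z := by
    rw [G_zw x w z y q, G_sw x w z q y]
  have e3 : G z y q w x = G z q y w x := by
    rw [G_xy z y q w x]
  have e4 : G z w q y x = G z q w x y := by
    rw [G_xy z w q y x, G_zw z q w y x]
  have e5 : G q y x z w = -G q w z x y := by
    rw [G_xy q y x z w, G_zw q x y z w, G_sw q x y w z]
  have e6 : G q z x y w = -G q w y x z := by
    rw [G_xy q z x y w, G_zw q x z y w, G_sw q x z w y]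
  have e7 : G x y w z q = -G x q z w y := by
    rw [G_xy x y w z q, G_zw x w y z q, G_sw x w y q z]
  have e8 : G x z w y q = -G x q y w z := by
    rw [G_xy x z w y q, G_zw x w z y q, G_sw x w z q y]
  have e9 : G w y q z x = G w q y x z := by
    rw [G_xy w y q z x, G_zw w q y z x]
  have e10 : G w z q y x = G w q z x y := by
    rw [G_xy w z q y x, G_zw w q z y x]
  have e11 : G q x y w z = -G q w z x y := by
    rw [G_sw q x y w z]
  have e12 : G y x z w q = -G y q w x z := by
    rw [G_zw y x z w q, G_sw y x z q w]
  have e13 : G y w z x q = -G y q x w z := by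
    rw [G_zw y w z x q, G_sw y w z q x]
  have e14 : G z x q w y = G z q x w y := by
    rw [G_xy z x q w y]
  have e15 : G z w q x y = G z q w x y := by
    rw [G_xy z w q x y]
  have e16 : G q x y z w = -G q w z x y := by
    rw [G_zw q x y z w, G_sw q x y w z]
  have e17 : G q z y x w = -G q w x y z := by
    rw [G_xy q z y x w, G_zw q y z x w, G_sw q y z w x]
  have e18 : G y x w z q = -G y q z w x := by
    rw [G_xy y x w z q, G_zw y w x z q, G_sw y w x q z]
  have e19 : G y z w x q = -G y q x w z := by
    rw [G_xy y z w x q, G_zw y w z x q, G_sw y w z q x]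
  have e20 : G w x q z y = G w q x y z := by
    rw [G_xy w x q z y, G_zw w q x z y]
  have e21 : G w z q x y = G w q z x y := by
    rw [G_xy w z q x y]
  have e22 : G y q x z w = G y q x w z := by
    rw [G_zw y q x z w]
  have e23 : G x q y z w = G x q y w z := by
    rw [G_zw x q y z w]
  have e24 : G q z w x y = G q w z x y := by
    rw [G_xy q z w x y]
  have e25 : G z x y q w = -G z q w x y := by
    rw [G_sw z x y q w]
  have e26 : G w x y q z = -G w q z x y := by
    rw [G_sw w x y q z]
  have e27 : G z q x y w = G z q x w y := by
    rw [G_zw z q x y w]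
  have e28 : G z q y x w = G z q y w x := by
    rw [G_zw z q y x w]
  have e29 : G x z w q y = -G x q y w z := by
    rw [G_xy x z w q y, G_sw x w z q y]
  have e30 : G y z w q x = -G y q x w z := by
    rw [G_xy y z w q x, G_sw y w z q x]
  have e31 : G x q w z y = G x q w y z := by
    rw [G_zw x q w z y]
  have e32 : G y q w z x = G y q w x z := by
    rw [G_zw y q w z x]
  rw [show m (G q x y z w) = _ from hm q _ _]
  simp only [map_sub, hh_apply, N1_apply, N2_apply]
  simp only [K, e0, e1, e2, e3, e4, e5, e6, e7, e8, e9, e10, e11, e12, e13, e14, e15, e16, e17, e18, e19, e20, e21, e22, e23, e24, e25, e26, e27, e28, e29, e30, e31, e32]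
  module

end Aux
section Aux2

variable {V W}
variable {M N P : Type} [AddCommGroup M] [Module ℚ M] [AddCommGroup N] [Module ℚ N]
  [AddCommGroup P] [Module ℚ P]

theorem mulC_comm2 (x p y : V) : mulC V x (sqm V p y) = mulC V y (sqm V p x) := by
  rw [sqm_comm p y, mulC_comm, sqm_comm x p]

theorem m_K (m : (V ⊗[ℚ] AltM (SqM V)) →ₗ[ℚ] (CubM V ⊗[ℚ] SqM V))
    (hm : ∀ (q : V) (u v : SqM V),
      m (q ⊗ₜ[ℚ] wdg (SqM V) u v) = mulC V q u ⊗ₜ[ℚ] v - mulC V q v ⊗ₜ[ℚ] u) (p q x y z : V) :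
    m (K p q x y z) = 0 := by
  simp only [K, G, map_add, hm]
  rw [mulC_comm2 y p x, mulC_comm2 y q x, mulC_comm2 z p x, mulC_comm2 z q x,
    mulC_comm2 z p y, mulC_comm2 z q y]
  abel

variable (V) in
def KS : Submodule ℚ (FF V) := Submodule.span ℚ {t | ∃ p q x y z, t = K p q x y z}

theorem K_mem (p q x y z : V) : K p q x y z ∈ KS V := Submodule.subset_span ⟨p, q, x, y, z, rfl⟩

theorem ker_eq (m : (V ⊗[ℚ] AltM (SqM V)) →ₗ[ℚ] (CubM V ⊗[ℚ] SqM V))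
    (hm : ∀ (q : V) (u v : SqM V),
      m (q ⊗ₜ[ℚ] wdg (SqM V) u v) = mulC V q u ⊗ₜ[ℚ] v - mulC V q v ⊗ₜ[ℚ] u) :
    LinearMap.ker m = KS V := by
  apply le_antisymm
  · have key : ∀ t : FF V, (10 : ℚ) • t - (3 : ℚ) • hh V (N1 V) (m t) + hh V (N2 V) (m t) ∈ KS V := by
      intro t
      induction t using FF_ind with
      | h0 => simp
      | ha a b h1 h2 =>
        have := add_mem h1 h2
        simp only [map_add, smul_add]
        convert this using 1
        abel
      | hg q x y z w =>
        rw [main_identity m hm]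
        exact add_mem (add_mem (add_mem (K_mem _ _ _ _ _) (K_mem _ _ _ _ _)) (K_mem _ _ _ _ _))
          (K_mem _ _ _ _ _)
    intro t ht
    have h := key t
    rw [LinearMap.mem_ker.1 ht] at h
    simp only [map_zero, smul_zero, sub_zero, add_zero] at h
    exact ((KS V).smul_mem_iff (by norm_num)).1 h
  · rw [KS, Submodule.span_le]
    rintro _ ⟨p, q, x, y, z, rfl⟩
    exact m_K m hm _ _ _ _ _

theorem TT_unique (f : V →ₗ[ℚ] V) (T : (V ⊗[ℚ] AltM (SqM V)) →ₗ[ℚ] (V ⊗[ℚ] AltM (SqM V)))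
    (hT : ∀ q x y z w : V, T (q ⊗ₜ[ℚ] wdg (SqM V) (sqm V x y) (sqm V z w))
          = f q ⊗ₜ[ℚ] wdg (SqM V) (sqm V (f x) (f y)) (sqm V (f z) (f w))) : T = TT f := by
  refine LinearMap.ext fun t => ?_
  induction t using FF_ind with
  | h0 => simp
  | ha a b h1 h2 => simp only [map_add, h1, h2]
  | hg q x y z w => rw [TT_G]; exact hT q x y z w

theorem TT_KS (f : V →ₗ[ℚ] V) : (KS V).map (TT f) ≤ KS V := by
  rw [KS, Submodule.map_span_le]
  rintro _ ⟨p, q, x, y, z, rfl⟩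
  rw [TT_K]
  exact K_mem _ _ _ _ _

/-! polynomial functions -/

def PF (φ : ℚ → M) : Prop := φ ∈ Submodule.span ℚ {f : ℚ → M | ∃ (n : ℕ) (w : M), f = fun t => t ^ n • w}

theorem PF.add {φ ψ : ℚ → M} (h1 : PF φ) (h2 : PF ψ) : PF (fun t => φ t + ψ t) :=
  Submodule.add_mem _ h1 h2

theorem PF.smul {φ : ℚ → M} (c : ℚ) (h1 : PF φ) : PF (fun t => c • φ t) :=
  Submodule.smul_mem _ c h1

theorem PF_zero : PF (fun _ => (0 : M)) := Submodule.zero_mem _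

theorem PF_mono (n : ℕ) (w : M) : PF (fun t => t ^ n • w) := Submodule.subset_span ⟨n, w, rfl⟩

theorem PF.bilin (B : M →ₗ[ℚ] N →ₗ[ℚ] P) {φ : ℚ → M} {ψ : ℚ → N} (h1 : PF φ) (h2 : PF ψ) :
    PF (fun t => B (φ t) (ψ t)) := by
  unfold PF at h1
  induction h1 using Submodule.span_induction with
  | zero => simpa using PF_zero
  | add a b _ _ h1 h2 => simpa using h1.add h2
  | smul c a _ h => simpa using PF.smul c h
  | mem f hf =>
    obtain ⟨n, w, rfl⟩ := hf
    unfold PF at h2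
    induction h2 using Submodule.span_induction with
    | zero => simpa using PF_zero
    | add a b _ _ h1 h2 => simpa using h1.add h2
    | smul c a _ h => simpa [smul_comm c] using PF.smul c h
    | mem f hf =>
      obtain ⟨k, v, rfl⟩ := hf
      have := PF_mono (k + n) (B w v)
      simpa [smul_smul, pow_add, mul_comm] using this

theorem PF.exists_poly {φ : ℚ → M} (h : PF φ) (l : M →ₗ[ℚ] ℚ) :
    ∃ p : Polynomial ℚ, ∀ t, p.eval t = l (φ t) := by
  unfold PF at h
  induction h using Submodule.span_induction with
  | zero => exact ⟨0, by simp⟩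
  | add a b _ _ h1 h2 =>
    obtain ⟨p, hp⟩ := h1
    obtain ⟨q, hq⟩ := h2
    exact ⟨p + q, by simp [hp, hq]⟩
  | smul c a _ h =>
    obtain ⟨p, hp⟩ := h
    exact ⟨c • p, by simp [hp]⟩
  | mem f hf =>
    obtain ⟨n, w, rfl⟩ := hf
    exact ⟨Polynomial.monomial n (l w), by simp [Polynomial.eval_monomial, mul_comm]⟩

theorem PF.mem_zero {φ : ℚ → M} (h : PF φ) (U : Submodule ℚ M)
    (hU : {t | φ t ∈ U}.Infinite) : φ 0 ∈ U := by
  by_contra hn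
  obtain ⟨l, hl, hU'⟩ := U.exists_le_ker_of_notMem hn
  obtain ⟨p, hp⟩ := h.exists_poly l
  have h0 : p = 0 := Polynomial.eq_zero_of_infinite_isRoot p (hU.mono fun t ht => by
    change p.eval t = 0
    rw [hp]
    exact hU' ht)
  apply hl
  rw [← hp, h0]; simp

theorem PF_TT (f : V →ₗ[ℚ] V) (x : FF V) : PF (fun t : ℚ => TT (f + t • (LinearMap.id : V →ₗ[ℚ] V)) x) := by
  have hv : ∀ v : V, PF (fun t : ℚ => (f + t • (LinearMap.id : V →ₗ[ℚ] V)) v) := fun v => by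
    simpa using (PF_mono 0 (f v)).add (PF_mono 1 v)
  induction x using FF_ind with
  | h0 => simpa using PF_zero
  | ha a b h1 h2 => simpa using h1.add h2
  | hg q x y z w =>
    simp only [TT_G]
    exact (hv q).bilin (TensorProduct.mk ℚ V (AltM (SqM V)))
      (((hv x).bilin (sqm V) (hv y)).bilin (wdg (SqM V)) ((hv z).bilin (sqm V) (hv w)))

theorem TT_mem [FiniteDimensional ℚ V] (U : Submodule ℚ (FF V))
    (hU : ∀ g : V ≃ₗ[ℚ] V, ∀ x ∈ U, TT (g : V →ₗ[ℚ] V) x ∈ U) (f : V →ₗ[ℚ] V) (x : FF V) (hx : x ∈ U) :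
    TT f x ∈ U := by
  have h := (PF_TT f x).mem_zero U ?_
  · simpa using h
  · have hfin : (spectrum ℚ (-f : Module.End ℚ V)).Finite := Module.End.finite_spectrum _
    refine hfin.infinite_compl.mono fun t ht => ?_
    have hu : IsUnit (algebraMap ℚ (Module.End ℚ V) t - (-f)) := by
      simpa [spectrum.mem_iff] using ht
    rw [sub_neg_eq_add, add_comm] at hu
    obtain ⟨e, he⟩ := (Module.End.isUnit_iff _).1 hu |> fun hb =>
      (⟨LinearEquiv.ofBijective _ hb, rfl⟩ : ∃ e : V ≃ₗ[ℚ] V, (e : V →ₗ[ℚ] V) = f + algebraMap ℚ (Module.End ℚ V) t)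
    have := hU e x hx
    rw [he] at this
    exact this

end Aux2
section Aux3

variable {V W}

theorem K_add1 (a b q x y z : V) : K (a + b) q x y z = K a q x y z + K b q x y z := by
  simp only [K, G_add2, G_add4]; abel
theorem K_add2 (a b q x y z : V) : K q (a + b) x y z = K q a x y z + K q b x y z := by
  simp only [K, G_add2, G_add4]; abel
theorem K_add3 (a b p q y z : V) : K p q (a + b) y z = K p q a y z + K p q b y z := by
  simp only [K, G_add1, G_add3, G_add5]; abel
theorem K_add4 (a b p q y z : V) : K p q y (a + b) z = K p q y a z + K p q y b z := by
  simp only [K, G_add1, G_add3, G_add5]; abel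
theorem K_add5 (a b p q y z : V) : K p q y z (a + b) = K p q y z a + K p q y z b := by
  simp only [K, G_add1, G_add3, G_add5]; abel
theorem K_smul1 (c : ℚ) (p q x y z : V) : K (c • p) q x y z = c • K p q x y z := by
  simp only [K, G_smul2, G_smul4, smul_add]
theorem K_smul2 (c : ℚ) (p q x y z : V) : K p (c • q) x y z = c • K p q x y z := by
  simp only [K, G_smul2, G_smul4, smul_add]
theorem K_smul3 (c : ℚ) (p q x y z : V) : K p q (c • x) y z = c • K p q x y z := by
  simp only [K, G_smul1, G_smul3, G_smul5, smul_add]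
theorem K_smul4 (c : ℚ) (p q x y z : V) : K p q x (c • y) z = c • K p q x y z := by
  simp only [K, G_smul1, G_smul3, G_smul5, smul_add]
theorem K_smul5 (c : ℚ) (p q x y z : V) : K p q x y (c • z) = c • K p q x y z := by
  simp only [K, G_smul1, G_smul3, G_smul5, smul_add]

theorem K_self2 (p q x z : V) : K p q x z z = 0 := by rw [K_cyc, K_self]
theorem K_self3 (p q x z : V) : K p q x z x = 0 := by rw [K_cyc, K_self2]

theorem K_polar (a x b c : V) : (2 : ℚ) • (K a a x b c + (2 : ℚ) • K a x a b c) =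
    K (x + a) (x + a) (x + a) b c + K (x + (-1 : ℚ) • a) (x + (-1 : ℚ) • a) (x + (-1 : ℚ) • a) b c
      - (2 : ℚ) • K x x x b c := by
  simp only [K_add1, K_add2, K_add3, K_smul1, K_smul2, K_smul3]
  rw [K_symm x a a]
  module

theorem KS_le (U : Submodule ℚ (FF V)) (h : ∀ a b c : V, K a a a b c ∈ U) : KS V ≤ U := by
  have h1 : ∀ a x b c, K a a x b c + (2 : ℚ) • K a x a b c ∈ U := by
    intro a x b c
    rw [← U.smul_mem_iff (show (2 : ℚ) ≠ 0 by norm_num), K_polar]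
    exact sub_mem (add_mem (h _ _ _) (h _ _ _)) (U.smul_mem _ (h _ _ _))
  have h2 : ∀ a x y z, K a a x y z ∈ U := by
    intro a x y z
    have e1 := h1 a x y z
    have e2 := h1 a y z x
    have e3 := h1 a z x y
    have k := K_koszul a x y z
    rw [K_cyc a y x a z, K_cyc a z x y a, K_cyc a z y a x] at k
    rw [← K_cyc a a x y z] at e2
    rw [K_cyc a a z x y] at e3
    rw [← U.smul_mem_iff (show (5 : ℚ) ≠ 0 by norm_num)]
    have := add_mem (add_mem e1 e2) e3
    convert this using 1
    linear_combination (norm := module) (2 : ℚ) • k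
  rw [KS, Submodule.span_le]
  rintro _ ⟨p, q, x, y, z, rfl⟩
  change _ ∈ U
  rw [← U.smul_mem_iff (show (2 : ℚ) ≠ 0 by norm_num)]
  have := sub_mem (sub_mem (h2 (p + q) x y z) (h2 p x y z)) (h2 q x y z)
  convert this using 1
  simp only [K_add1, K_add2]
  rw [K_symm q p]
  module

theorem K_det (p q e1 e2 e3 : V) (x1 x2 x3 y1 y2 y3 z1 z2 z3 : ℚ) :
    K p q (x1 • e1 + x2 • e2 + x3 • e3) (y1 • e1 + y2 • e2 + y3 • e3) (z1 • e1 + z2 • e2 + z3 • e3)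
    = (x1 * (y2 * z3 - y3 * z2) - x2 * (y1 * z3 - y3 * z1) + x3 * (y1 * z2 - y2 * z1)) •
      K p q e1 e2 e3 := by
  simp only [K_add3, K_add4, K_add5, K_smul3, K_smul4, K_smul5, K_self, K_self2, K_self3]
  have a1 : K p q e2 e3 e1 = K p q e1 e2 e3 := (K_cyc _ _ _ _ _).symm
  have a2 : K p q e3 e1 e2 = K p q e1 e2 e3 := K_cyc _ _ _ _ _
  have a3 : K p q e2 e1 e3 = - K p q e1 e2 e3 := K_swap _ _ _ _ _
  have a4 : K p q e1 e3 e2 = - K p q e1 e2 e3 := by rw [K_swap, a2]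
  have a5 : K p q e3 e2 e1 = - K p q e1 e2 e3 := by rw [K_swap, a1]
  rw [a1, a2, a3, a4, a5]
  module

/-! forms -/

def sqForm (B : V →ₗ[ℚ] V →ₗ[ℚ] ℚ) : SqM V →ₗ[ℚ] SqM V →ₗ[ℚ] ℚ :=
  sqSym (LinearMap.mk₂ ℚ (fun x y => sqSym ((LinearMap.mul ℚ ℚ).compl₁₂ (B x) (B y)))
    (fun a b z => by apply sq_ext; intros; simp; ring)
    (fun c a z => by apply sq_ext; intros; simp; ring)
    (fun a b z => by apply sq_ext; intros; simp; ring)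
    (fun c a z => by apply sq_ext; intros; simp; ring))

theorem sqForm_apply (B : V →ₗ[ℚ] V →ₗ[ℚ] ℚ) (x y z w : V) :
    sqForm B (sqm V x y) (sqm V z w) = 2 * (B x z * B y w + B x w * B y z) := by
  simp [sqForm]; ring

def altForm (B : W →ₗ[ℚ] W →ₗ[ℚ] ℚ) : AltM W →ₗ[ℚ] AltM W →ₗ[ℚ] ℚ :=
  altSym (LinearMap.mk₂ ℚ (fun x y => altSym ((LinearMap.mul ℚ ℚ).compl₁₂ (B x) (B y)))
    (fun a b z => by apply alt_ext; intros; simp; ring)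
    (fun c a z => by apply alt_ext; intros; simp; ring)
    (fun a b z => by apply alt_ext; intros; simp; ring)
    (fun c a z => by apply alt_ext; intros; simp; ring))

theorem altForm_apply (B : W →ₗ[ℚ] W →ₗ[ℚ] ℚ) (x y z w : W) :
    altForm B (wdg W x y) (wdg W z w) = 2 * (B x z * B y w - B x w * B y z) := by
  simp [altForm]; ring

def tForm (A : V →ₗ[ℚ] V →ₗ[ℚ] ℚ) (B : W →ₗ[ℚ] W →ₗ[ℚ] ℚ) :
    V ⊗[ℚ] W →ₗ[ℚ] V ⊗[ℚ] W →ₗ[ℚ] ℚ :=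
  TensorProduct.lift (LinearMap.mk₂ ℚ
    (fun x y => TensorProduct.lift ((LinearMap.mul ℚ ℚ).compl₁₂ (A x) (B y)))
    (fun a b z => by apply TensorProduct.ext'; intros; simp)
    (fun c a z => by apply TensorProduct.ext'; intros; simp; ring)
    (fun a b z => by apply TensorProduct.ext'; intros; simp; ring)
    (fun c a z => by apply TensorProduct.ext'; intros; simp; ring))

theorem tForm_apply (A : V →ₗ[ℚ] V →ₗ[ℚ] ℚ) (B : W →ₗ[ℚ] W →ₗ[ℚ] ℚ) (x z : V) (y w : W) :
    tForm A B (x ⊗ₜ y) (z ⊗ₜ w) = A x z * B y w := by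
  simp [tForm]

def ffForm (B : V →ₗ[ℚ] V →ₗ[ℚ] ℚ) : FF V →ₗ[ℚ] FF V →ₗ[ℚ] ℚ := tForm B (altForm (sqForm B))

theorem ffForm_G (B : V →ₗ[ℚ] V →ₗ[ℚ] ℚ) (q x y z w q' x' y' z' w' : V) :
    ffForm B (G q x y z w) (G q' x' y' z' w') =
      8 * B q q' * ((B x x' * B y y' + B x y' * B y x') * (B z z' * B w w' + B z w' * B w z')
       - (B x z' * B y w' + B x w' * B y z') * (B z x' * B w y' + B z y' * B w x')) := by
  rw [ffForm, G, G, tForm_apply, altForm_apply]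
  simp only [sqForm_apply]
  ring

set_option maxHeartbeats 4000000 in
theorem ffForm_K (B : V →ₗ[ℚ] V →ₗ[ℚ] ℚ) (p q x y z a b c : V) :
    ffForm B (K p q x y z) (K a a a b c) =
      160 * (B p a * B q a * (B x a * (B y b * B z c - B y c * B z b)
        - B x b * (B y a * B z c - B y c * B z a) + B x c * (B y a * B z b - B y b * B z a))) := by
  simp only [K, map_add, LinearMap.add_apply, ffForm_G]
  ring

def Frame (B : W →ₗ[ℚ] W →ₗ[ℚ] ℚ) : Prop :=
  ∃ (ι : Type) (_ : Fintype ι) (w : ι → W) (c : ℚ), 0 < c ∧ ∀ x, ∑ i, B x (w i) • w i = c • x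

theorem Frame.pos {B : W →ₗ[ℚ] W →ₗ[ℚ] ℚ} (h : Frame B) (x : W) (hx : B x x = 0) : x = 0 := by
  obtain ⟨ι, _, w, c, hc, h⟩ := h
  have h1 := congrArg (B x) (h x)
  simp only [map_sum, map_smul, hx, smul_eq_mul, mul_zero] at h1
  have h2 := (Finset.sum_eq_zero_iff_of_nonneg (fun i _ => mul_self_nonneg _)).1 h1
  have h3 : c • x = 0 := by
    rw [← h x]
    refine Finset.sum_eq_zero fun i hi => ?_
    rw [mul_self_eq_zero.1 (h2 i hi), zero_smul]
  exact (smul_eq_zero.1 h3).resolve_left hc.ne'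

/-- bilinear expansion along a frame -/
theorem frame_bilin {M : Type} [AddCommGroup M] [Module ℚ M] {V' : Type} [AddCommGroup V'] [Module ℚ V']
    {ι κ : Type} [Fintype ι] [Fintype κ] (f : V →ₗ[ℚ] V' →ₗ[ℚ] M)
    (v : ι → V) (w : κ → V') (r : ι → ℚ) (s : κ → ℚ) :
    ∑ p : ι × κ, (r p.1 * s p.2) • f (v p.1) (w p.2) = f (∑ i, r i • v i) (∑ j, s j • w j) := by
  rw [Fintype.sum_prod_type]
  simp only [map_sum, map_smul, LinearMap.sum_apply, LinearMap.smul_apply, Finset.smul_sum, smul_smul]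
  rw [Finset.sum_comm]
  simp only [mul_comm]

theorem Frame.sq {B : V →ₗ[ℚ] V →ₗ[ℚ] ℚ} (h : Frame B) : Frame (sqForm B) := by
  obtain ⟨ι, _, w, c, hc, h⟩ := h
  refine ⟨ι × ι, inferInstance, fun p => sqm V (w p.1) (w p.2), 4 * c ^ 2, by positivity, fun s => ?_⟩
  induction s using sq_ind with
  | h0 => simp
  | ha a b h1 h2 => simp only [map_add, LinearMap.add_apply, add_smul, Finset.sum_add_distrib, h1, h2, smul_add]
  | hg x y =>
    have e1 := frame_bilin (sqm V) w w (fun i => B x (w i)) (fun i => B y (w i))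
    have e2 := frame_bilin (sqm V) w w (fun i => B y (w i)) (fun i => B x (w i))
    rw [h, h] at e1 e2
    rw [map_smul, map_smul, LinearMap.smul_apply] at e1 e2
    rw [sqm_comm y x] at e2
    have : ∀ p : ι × ι, sqForm B (sqm V x y) (sqm V (w p.1) (w p.2)) • sqm V (w p.1) (w p.2)
      = (2 : ℚ) • (B x (w p.1) * B y (w p.2)) • sqm V (w p.1) (w p.2)
        + (2 : ℚ) • (B y (w p.1) * B x (w p.2)) • sqm V (w p.1) (w p.2) := by
      intro p
      rw [sqForm_apply]
      module
    simp only [this, Finset.sum_add_distrib, ← Finset.smul_sum, e1, e2]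
    module

theorem Frame.alt {B : W →ₗ[ℚ] W →ₗ[ℚ] ℚ} (h : Frame B) : Frame (altForm B) := by
  obtain ⟨ι, _, w, c, hc, h⟩ := h
  refine ⟨ι × ι, inferInstance, fun p => wdg W (w p.1) (w p.2), 4 * c ^ 2, by positivity, fun s => ?_⟩
  induction s using alt_ind with
  | h0 => simp
  | ha a b h1 h2 => simp only [map_add, LinearMap.add_apply, add_smul, Finset.sum_add_distrib, h1, h2, smul_add]
  | hg x y =>
    have e1 := frame_bilin (wdg W) w w (fun i => B x (w i)) (fun i => B y (w i))
    have e2 := frame_bilin (wdg W) w w (fun i => B y (w i)) (fun i => B x (w i))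
    rw [h, h] at e1 e2
    rw [map_smul, map_smul, LinearMap.smul_apply] at e1 e2
    rw [wdg_anti y x] at e2
    have : ∀ p : ι × ι, altForm B (wdg W x y) (wdg W (w p.1) (w p.2)) • wdg W (w p.1) (w p.2)
      = (2 : ℚ) • (B x (w p.1) * B y (w p.2)) • wdg W (w p.1) (w p.2)
        + (-2 : ℚ) • (B y (w p.1) * B x (w p.2)) • wdg W (w p.1) (w p.2) := by
      intro p
      rw [altForm_apply]
      module
    simp only [this, Finset.sum_add_distrib, ← Finset.smul_sum, e1, e2]
    module

theorem Frame.tmul {A : V →ₗ[ℚ] V →ₗ[ℚ] ℚ} {B : W →ₗ[ℚ] W →ₗ[ℚ] ℚ} (hA : Frame A) (hB : Frame B) :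
    Frame (tForm A B) := by
  obtain ⟨ι, _, v, c, hc, h⟩ := hA
  obtain ⟨κ, _, w, d, hd, h'⟩ := hB
  refine ⟨ι × κ, inferInstance, fun p => v p.1 ⊗ₜ w p.2, c * d, by positivity, fun s => ?_⟩
  induction s using TensorProduct.induction_on with
  | zero => simp
  | add a b h1 h2 => simp only [map_add, LinearMap.add_apply, add_smul, Finset.sum_add_distrib, h1, h2, smul_add]
  | tmul x y =>
    have e1 := frame_bilin (TensorProduct.mk ℚ V W) v w (fun i => A x (v i)) (fun i => B y (w i))
    rw [h, h'] at e1
    simp only [tForm_apply]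
    refine e1.trans ?_
    simp [smul_smul, smul_tmul', mul_comm]

theorem comp_mem (B : V →ₗ[ℚ] V →ₗ[ℚ] ℚ) (U : Submodule ℚ (FF V)) (hUK : U ≤ KS V)
    (hU : ∀ (f : V →ₗ[ℚ] V), ∀ x ∈ U, TT f x ∈ U) (a b c e1 e2 e3 : V) (x : FF V) (hx : x ∈ U) :
    ffForm B x (K a a a b c) • K e1 e1 e1 e2 e3 ∈ U := by
  let f : ℚ → (V →ₗ[ℚ] V) := fun t =>
    (B.flip a).smulRight e1 + (t • B.flip b).smulRight e2 + (t • B.flip c).smulRight e3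
  have hf : ∀ t v, f t v = B v a • e1 + (t * B v b) • e2 + (t * B v c) • e3 := by
    intro t v; simp [f]
  have key : ∀ y ∈ KS V, (480 : ℚ) • TT (f 1) y - (120 : ℚ) • TT (f 2) y + (160 / 9 : ℚ) • TT (f 3) y
      = ffForm B y (K a a a b c) • K e1 e1 e1 e2 e3 := by
    intro y hy
    unfold KS at hy
    induction hy using Submodule.span_induction with
    | zero => simp
    | add u v _ _ h1 h2 =>
      simp only [map_add, LinearMap.add_apply, add_smul, ← h1, ← h2]; module
    | smul r u _ h1 =>
      simp only [map_smul, LinearMap.smul_apply, smul_assoc, ← h1]; module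
    | mem y hy =>
      obtain ⟨p, q, x, y, z, rfl⟩ := hy
      rw [ffForm_K]
      simp only [TT_K, hf, K_det]
      simp only [K_add1, K_add2, K_smul1, K_smul2]
      module
  rw [← key x (hUK hx)]
  exact add_mem (sub_mem (U.smul_mem _ (hU _ _ hx)) (U.smul_mem _ (hU _ _ hx))) (U.smul_mem _ (hU _ _ hx))

end Aux3
/-- **Lemma 2.1(ii).** For `dim V ≥ 3`, the subspace `R(V) = ker m ⊆ V ⊗ Λ²(P²V)` is
invariant under the `GL(V)`-action given by functoriality, it is nonzero, and it is an
irreducible `GL(V)`-representation: its only invariant subspaces are `0` and `R(V)`. -/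
theorem R_irreducible [FiniteDimensional ℚ V] (hdim : 3 ≤ Module.finrank ℚ V)
    (m : (V ⊗[ℚ] AltM (SqM V)) →ₗ[ℚ] (CubM V ⊗[ℚ] SqM V))
    (hm : ∀ (q : V) (u v : SqM V),
      m (q ⊗ₜ[ℚ] wdg (SqM V) u v) = mulC V q u ⊗ₜ[ℚ] v - mulC V q v ⊗ₜ[ℚ] u) :
    (∀ (g : V ≃ₗ[ℚ] V) (T : (V ⊗[ℚ] AltM (SqM V)) →ₗ[ℚ] (V ⊗[ℚ] AltM (SqM V))),
      (∀ q x y z w : V,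
        T (q ⊗ₜ[ℚ] wdg (SqM V) (sqm V x y) (sqm V z w))
          = g q ⊗ₜ[ℚ] wdg (SqM V) (sqm V (g x) (g y)) (sqm V (g z) (g w))) →
      (LinearMap.ker m).map T ≤ LinearMap.ker m) ∧
    LinearMap.ker m ≠ ⊥ ∧
    (∀ U : Submodule ℚ (V ⊗[ℚ] AltM (SqM V)), U ≤ LinearMap.ker m →
      (∀ (g : V ≃ₗ[ℚ] V) (T : (V ⊗[ℚ] AltM (SqM V)) →ₗ[ℚ] (V ⊗[ℚ] AltM (SqM V))),
        (∀ q x y z w : V,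
          T (q ⊗ₜ[ℚ] wdg (SqM V) (sqm V x y) (sqm V z w))
            = g q ⊗ₜ[ℚ] wdg (SqM V) (sqm V (g x) (g y)) (sqm V (g z) (g w))) →
        U.map T ≤ U) →
      U = ⊥ ∨ U = LinearMap.ker m) := by
  let b := Module.finBasis ℚ V
  let B : V →ₗ[ℚ] V →ₗ[ℚ] ℚ := b.toDual
  have hB : Frame B := ⟨_, inferInstance, b, 1, one_pos, fun x => by
    simp [B, b.toDual_apply_left]⟩
  have hF : Frame (ffForm B) := hB.tmul hB.sq.alt
  have hker := ker_eq m hm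
  refine ⟨?_, ?_, ?_⟩
  · intro g T hT
    rw [TT_unique (g : V →ₗ[ℚ] V) T hT, hker]
    exact TT_KS _
  · rw [hker]
    intro h0
    have h1 := K_mem (b ⟨0, by lia⟩) (b ⟨0, by lia⟩) (b ⟨0, by lia⟩) (b ⟨1, by lia⟩) (b ⟨2, by lia⟩)
    rw [h0, Submodule.mem_bot] at h1
    have h2 := ffForm_K B (b ⟨0, by lia⟩) (b ⟨0, by lia⟩) (b ⟨0, by lia⟩) (b ⟨1, by lia⟩) (b ⟨2, by lia⟩)
      (b ⟨0, by lia⟩) (b ⟨1, by lia⟩) (b ⟨2, by lia⟩)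
    rw [h1] at h2
    simp [B, b.toDual_apply] at h2
  · intro U hUK hU
    rw [hker] at hUK ⊢
    have hU1 : ∀ f : V →ₗ[ℚ] V, ∀ x ∈ U, TT f x ∈ U := fun f x hx =>
      TT_mem U (fun g x hx => hU g (TT (g : V →ₗ[ℚ] V)) (fun q x y z w => TT_G _ q x y z w)
        (Submodule.mem_map_of_mem hx)) f x hx
    by_cases hex : ∃ x ∈ U, ∃ a b c : V, ffForm B x (K a a a b c) ≠ 0
    · right
      obtain ⟨x, hx, a, b, c, hne⟩ := hex
      refine le_antisymm hUK (KS_le U fun e1 e2 e3 => ?_)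
      exact (U.smul_mem_iff hne).1 (comp_mem B U hUK hU1 a b c e1 e2 e3 x hx)
    · left
      push Not at hex
      rw [Submodule.eq_bot_iff]
      intro x hx
      refine hF.pos x ?_
      exact KS_le (LinearMap.ker (ffForm B x)) (fun a b c => hex x hx a b c) (hUK hx)

end
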